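/- arXiv:1504.04164 — 3 statements merged into one kernel-verified Lean document; each statement's English description precedes it below -/
import Mathlib

section
/- Let H(R) denote the Heisenberg group of upper unitriangular 3×3 matrices over a ring R. For all but finitely many primes p the following holds for every finite extension K of ℚ_p, with valuation ring 𝒪_K and residue field of cardinality q_K: writing r̃_n for the number of twist-equivalence classes of continuous irreducible representations H(𝒪_K) → GL_n(ℂ) of the topological group H(𝒪_K), one has r̃_1 = 1, r̃_{q_K^i} = q_K^i − q_K^{i−1} for every integer i ≥ 1, and r̃_n = 0 for every n ≥ 2 that is not a positive power of q_K. Equivalently, the twist-representation zeta function of H(𝒪_K) equals (1 − q_K^{−s})/(1 − q_K^{1−s}). -/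
noncomputable section

/-- The Heisenberg group over `R`: the group of upper unitriangular 3×3 matrices
`[[1, a, c], [0, 1, b], [0, 0, 1]]`, recorded via their entries `a`, `b`, `c`. -/
@[ext]
structure Heisenberg (R : Type) where
  a : R
  b : R
  c : R

namespace Heisenberg

variable {R : Type} [CommRing R]

instance : Group (Heisenberg R) where
  mul x y := ⟨x.a + y.a, x.b + y.b, x.c + y.c + x.a * y.b⟩
  one := ⟨0, 0, 0⟩
  inv x := ⟨-x.a, -x.b, -x.c + x.a * x.b⟩
  mul_assoc x y z := by
    refine Heisenberg.ext ?_ ?_ ?_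
    · show (x.a + y.a) + z.a = x.a + (y.a + z.a); ring
    · show (x.b + y.b) + z.b = x.b + (y.b + z.b); ring
    · show (x.c + y.c + x.a * y.b) + z.c + (x.a + y.a) * z.b
        = x.c + (y.c + z.c + y.a * z.b) + x.a * (y.b + z.b); ring
  one_mul x := by
    refine Heisenberg.ext ?_ ?_ ?_
    · show (0 : R) + x.a = x.a; ring
    · show (0 : R) + x.b = x.b; ring
    · show (0 : R) + x.c + 0 * x.b = x.c; ring
  mul_one x := by
    refine Heisenberg.ext ?_ ?_ ?_
    · show x.a + 0 = x.a; ring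
    · show x.b + 0 = x.b; ring
    · show x.c + 0 + x.a * 0 = x.c; ring
  inv_mul_cancel x := by
    refine Heisenberg.ext ?_ ?_ ?_
    · show -x.a + x.a = (0 : R); ring
    · show -x.b + x.b = (0 : R); ring
    · show (-x.c + x.a * x.b) + x.c + (-x.a) * x.b = (0 : R); ring

instance [TopologicalSpace R] : TopologicalSpace (Heisenberg R) :=
  TopologicalSpace.induced (fun x => (x.a, x.b, x.c)) inferInstance

end Heisenberg

/-- irreducibility of a finite-dimensional complex representation -/
def IsIrreducibleRep {G : Type} [Group G] {n : ℕ} (ρ : G →* GL (Fin n) ℂ) : Prop :=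
  ∀ U : Submodule ℂ (Fin n → ℂ),
    (∀ g : G, ∀ x ∈ U, Matrix.mulVec (ρ g : Matrix (Fin n) (Fin n) ℂ) x ∈ U) →
    U = ⊥ ∨ U = ⊤

/-- continuous irreducible `n`-dimensional complex representations of a topological
group `G` -/
def ContIrrRep (G : Type) [Group G] [TopologicalSpace G] (n : ℕ) : Type :=
  {ρ : G →* GL (Fin n) ℂ //
    Continuous (fun g : G => (ρ g : Matrix (Fin n) (Fin n) ℂ)) ∧ IsIrreducibleRep ρ}

/-- twist-equivalence: `ρ ≃ (σ ⊗ α) ` for a continuous `1`-dimensional character `α` -/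
def contTwistRel (G : Type) [Group G] [TopologicalSpace G] (n : ℕ) :
    ContIrrRep G n → ContIrrRep G n → Prop :=
  fun ρ σ => ∃ α : G →* ℂˣ, Continuous (fun g : G => (α g : ℂ)) ∧
    ∃ T : GL (Fin n) ℂ, ∀ g : G,
      (ρ.1 g : Matrix (Fin n) (Fin n) ℂ)
        = (α g : ℂ) • ((T * σ.1 g * T⁻¹ : GL (Fin n) ℂ) : Matrix (Fin n) (Fin n) ℂ)

/-- the number `r̃_n(G)` of twist-equivalence classes of continuous irreducible
`n`-dimensional complex representations of `G` -/
noncomputable def rTildeCont (G : Type) [Group G] [TopologicalSpace G] (n : ℕ) : ℕ :=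
  Nat.card (Quot (contTwistRel G n))

/-!
The centre of the Heisenberg group acts on an irreducible representation through an additive
character `ψ` of `R`. Let `I` be the conductor of `ψ`. After a twist some nonzero vector `v` is
fixed by the one-parameter subgroup of the matrix entry `a`, and some nonzero vector by that of the
entry `b`. Hence the latter subgroup acts through `R ⧸ I`, and its translates of `v` define a
nonzero intertwining map from the Schrödinger representation on functions on `R ⧸ I`, which is
irreducible. So `ψ` determines the representation up to twist, the dimension is `|R ⧸ I|`, and twist
classes of dimension `n` correspond to continuous characters with conductor of index `n`. In a
compact discrete valuation ring with residue field of cardinality `q` these conductors are the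
powers of the maximal ideal `P`, and as there are `q ^ i` characters trivial on `P ^ i`, exactly
`q ^ i - q ^ (i - 1)` have conductor `P ^ i`.
-/

section Conductor

variable {R M N : Type*} [CommRing R] [CommMonoid M] [Monoid N]

/-- The conductor of an additive character `ψ` of a ring: the largest ideal on which `ψ` is
trivial. -/
def addCharConductor (ψ : AddChar R M) : Ideal R where
  carrier := {r | ψ.mulShift r = 1}
  add_mem' {r s} hr hs := by
    rw [Set.mem_ofPred_eq] at hr hs ⊢
    rw [← AddChar.mulShift_mul, hr, hs, mul_one]
  zero_mem' := AddChar.mulShift_zero ψ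
  smul_mem' s r hr := by
    rw [Set.mem_ofPred_eq, AddChar.eq_one_iff] at hr ⊢
    intro x
    rw [AddChar.mulShift_apply, smul_eq_mul, mul_comm s r, mul_assoc]
    exact hr (s * x)

theorem mem_addCharConductor_iff {ψ : AddChar R M} {r : R} :
    r ∈ addCharConductor ψ ↔ ∀ x, ψ (r * x) = 1 :=
  AddChar.eq_one_iff

theorem le_addCharConductor_iff {ψ : AddChar R M} {I : Ideal R} :
    I ≤ addCharConductor ψ ↔ ∀ r ∈ I, ψ r = 1 := by
  refine ⟨fun h r hr ↦ ?_, fun h r hr ↦ mem_addCharConductor_iff.2 fun x ↦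
    h _ (I.mul_mem_right x hr)⟩
  simpa using mem_addCharConductor_iff.1 (h hr) 1

/-- The additive character of `R ⧸ I` induced by an additive character of `R` that is trivial
on `I`. -/
def quotientAddChar (I : Ideal R) (T : AddChar R N) (hT : ∀ r ∈ I, T r = 1) :
    AddChar (R ⧸ I) N where
  toFun := Quotient.lift T fun r s hrs ↦ by
    rw [← sub_add_cancel r s, AddChar.map_add_eq_mul, hT _ ((Submodule.quotientRel_def I).1 hrs),
      one_mul]
  map_zero_eq_one' := T.map_zero_eq_one
  map_add_eq_mul' := by
    rintro ⟨r⟩ ⟨s⟩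
    exact T.map_add_eq_mul r s

theorem quotientAddChar_mk {I : Ideal R} {T : AddChar R N} (hT : ∀ r ∈ I, T r = 1) (r : R) :
    quotientAddChar I T hT (Ideal.Quotient.mk I r) = T r :=
  rfl

/-- The nondegenerate pairing of `R ⧸ addCharConductor ψ` with `R` induced by `(r, s) ↦ ψ (r * s)`,
as a family of characters of `R` indexed by `R ⧸ addCharConductor ψ`. -/
def conductorPairing (ψ : AddChar R M) : AddChar (R ⧸ addCharConductor ψ) (AddChar R M) :=
  quotientAddChar (addCharConductor ψ)
    { toFun := ψ.mulShift
      map_zero_eq_one' := ψ.mulShift_zero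
      map_add_eq_mul' r s := (ψ.mulShift_mul r s).symm }
    fun _ hr ↦ hr

@[simp]
theorem conductorPairing_mk (ψ : AddChar R M) (r s : R) :
    conductorPairing ψ (Ideal.Quotient.mk _ r) s = ψ (r * s) :=
  rfl

theorem conductorPairing_injective (ψ : AddChar R M) :
    Function.Injective (conductorPairing ψ) := by
  refine AddChar.injective_iff.2 fun r hr ↦ ?_
  obtain ⟨r, rfl⟩ := Ideal.Quotient.mk_surjective r
  exact Ideal.Quotient.eq_zero_iff_mem.2 hr

/-- Additive characters of `R` whose conductor contains `I` are the additive characters of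
`R ⧸ I`. -/
def addCharQuotientEquiv (M : Type*) [CommMonoid M] (I : Ideal R) :
    {ψ : AddChar R M // I ≤ addCharConductor ψ} ≃ AddChar (R ⧸ I) M where
  toFun ψ := quotientAddChar I ψ.1 (le_addCharConductor_iff.1 ψ.2)
  invFun χ := ⟨χ.compAddMonoidHom (Ideal.Quotient.mk I).toAddMonoidHom,
    le_addCharConductor_iff.2 fun r hr ↦ by
      simp [Ideal.Quotient.eq_zero_iff_mem.2 hr]⟩
  left_inv _ := rfl
  right_inv χ := by
    ext r
    obtain ⟨r, rfl⟩ := Ideal.Quotient.mk_surjective r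
    rfl

theorem card_addChar_le_conductor (I : Ideal R) [Finite (R ⧸ I)] :
    Nat.card {ψ : AddChar R ℂ // I ≤ addCharConductor ψ} = Nat.card (R ⧸ I) := by
  have := Fintype.ofFinite (R ⧸ I)
  rw [Nat.card_congr (addCharQuotientEquiv ℂ I), Nat.card_eq_fintype_card,
    Nat.card_eq_fintype_card, AddChar.card_eq]

end Conductor

section Topology

variable {R M : Type*} [CommRing R] [TopologicalSpace R] [IsTopologicalRing R]

theorem discreteTopology_quotient_of_isOpen {I : Ideal R} (hI : IsOpen (I : Set R)) :
    DiscreteTopology (R ⧸ I) :=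
  QuotientAddGroup.discreteTopology hI

variable [CommMonoid M] [TopologicalSpace M]

theorem continuous_of_isOpen_of_le_conductor {I : Ideal R} (hI : IsOpen (I : Set R))
    {ψ : AddChar R M} (h : I ≤ addCharConductor ψ) : Continuous ψ :=
  have := discreteTopology_quotient_of_isOpen hI
  (continuous_of_discreteTopology (f := quotientAddChar I ψ (le_addCharConductor_iff.1 h))).comp
    (continuous_quot_mk)

theorem isOpen_conductor_of_continuous [T1Space M] {ψ : AddChar R M} (hψ : Continuous ψ)
    [Finite (R ⧸ addCharConductor ψ)] : IsOpen (addCharConductor ψ : Set R) := by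
  have hclosed : IsClosed (addCharConductor ψ : Set R) := by
    have : (addCharConductor ψ : Set R) = ⋂ x, (fun r ↦ ψ (r * x)) ⁻¹' {1} := by
      ext r
      simp [mem_addCharConductor_iff]
    rw [this]
    exact isClosed_iInter fun x ↦ isClosed_singleton.preimage (by fun_prop)
  have : Finite (R ⧸ (addCharConductor ψ).toAddSubgroup) :=
    inferInstanceAs (Finite (R ⧸ addCharConductor ψ))
  have := AddSubgroup.finiteIndex_of_finite_quotient (H := (addCharConductor ψ).toAddSubgroup)
  exact (addCharConductor ψ).toAddSubgroup.isOpen_of_isClosed_of_finiteIndex hclosed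

end Topology

section Eigenvectors

variable {k V : Type*} [Field k] [AddCommGroup V] [Module k V]

theorem exists_common_eigenvector [IsAlgClosed k] [FiniteDimensional k V] [Nontrivial V]
    {G : Type*} [CommMonoid G] (ρ : Representation k G V) :
    ∃ v ≠ 0, ∀ g, ∃ c : k, c • v = ρ g v := by
  have : IsArtinian (MonoidAlgebra k G) ρ.asModule := isArtinian_of_tower k inferInstance
  have : Nontrivial ρ.asModule := inferInstanceAs (Nontrivial V)
  obtain ⟨W, hW⟩ := IsAtomic.exists_atom (Submodule (MonoidAlgebra k G) ρ.asModule)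
  have := isSimpleModule_iff_isAtom.2 hW
  have : FiniteDimensional k W :=
    inferInstanceAs (FiniteDimensional k (W.restrictScalars k))
  obtain ⟨v, hv, hspan⟩ := finrank_eq_one_iff'.1
    (IsSimpleModule.finrank_eq_one_of_isMulCommutative (MonoidAlgebra k G) W k)
  refine ⟨ρ.asModuleEquiv v, by simpa using hv, fun g ↦ ?_⟩
  obtain ⟨c, hc⟩ := hspan (MonoidAlgebra.of k G g • v)
  refine ⟨c, ?_⟩
  simpa [-Representation.single_smul] using congrArg (fun w : W ↦ ρ.asModuleEquiv w) hc

theorem exists_addChar_eigenvector [IsAlgClosed k] [FiniteDimensional k V] [Nontrivial V]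
    {A : Type*} [AddCommMonoid A] (T : AddChar A (Module.End k V)) :
    ∃ (χ : AddChar A k) (v : V), v ≠ 0 ∧ ∀ a, T a v = χ a • v := by
  obtain ⟨v, hv, h⟩ := exists_common_eigenvector (G := Multiplicative A) T.toMonoidHom
  choose c hc using h
  refine ⟨⟨fun a ↦ c (.ofAdd a), smul_left_injective k hv ?_, fun a b ↦
    smul_left_injective k hv ?_⟩, v, hv, fun a ↦ (hc (.ofAdd a)).symm⟩
  · simp [hc]
  · change c (.ofAdd a * .ofAdd b) • v = (c (.ofAdd a) * c (.ofAdd b)) • v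
    rw [hc, map_mul, Module.End.mul_apply, ← hc (.ofAdd b), map_smul, ← hc, smul_smul, mul_comm]

theorem mem_of_sum_mem_of_addChar {A ι : Type*} [AddMonoid A] {T : A → Module.End k V}
    {χ : ι → AddChar A k} (hχ : Function.Injective χ) {w : ι → V}
    (hw : ∀ i a, T a (w i) = χ i a • w i) {U : Submodule k V}
    (hU : ∀ a, ∀ u ∈ U, T a u ∈ U) {s : Finset ι} (hs : ∑ i ∈ s, w i ∈ U) {i : ι} (hi : i ∈ s) :
    w i ∈ U := by
  by_contra hwi
  obtain ⟨f, hfi, hfU⟩ := Submodule.exists_le_ker_of_notMem hwi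
  have hindep : LinearIndependent k fun j ↦ (χ j : A → k) :=
    (linearIndependent_monoidHom (Multiplicative A) k).comp
      (fun j ↦ (χ j).toMonoidHom) (AddChar.toMonoidHomEquiv.injective.comp hχ)
  refine hfi (linearIndependent_iff'.1 hindep s (fun j ↦ f (w j)) ?_ i hi)
  ext a
  have : f (T a (∑ j ∈ s, w j)) = 0 := hfU (hU a _ hs)
  simpa [hw, mul_comm] using this

end Eigenvectors

section Irreducible

variable {k G V : Type*} [Field k] [Monoid G] [AddCommGroup V] [Module k V]
  {ρ : Representation k G V}

theorem isIrreducible_iff : ρ.IsIrreducible ↔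
    Nontrivial V ∧ ∀ U : Submodule k V, (∀ g, ∀ u ∈ U, ρ g u ∈ U) → U = ⊥ ∨ U = ⊤ := by
  constructor
  · intro h
    refine ⟨?_, fun U hU ↦ ?_⟩
    · by_contra hV
      rw [not_nontrivial_iff_subsingleton] at hV
      exact bot_ne_top (α := Subrepresentation ρ)
        (Subrepresentation.toSubmodule_injective (Subsingleton.elim _ _))
    · exact (eq_bot_or_eq_top (⟨U, hU⟩ : Subrepresentation ρ)).imp
        (congrArg Subrepresentation.toSubmodule) (congrArg Subrepresentation.toSubmodule)
  · rintro ⟨hV, h⟩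
    exact {
      exists_pair_ne := ⟨⊥, ⊤, fun h ↦ bot_ne_top (congrArg Subrepresentation.toSubmodule h)⟩
      eq_bot_or_eq_top U := (h U.toSubmodule U.apply_mem_toSubmodule).imp
        (Subrepresentation.toSubmodule_injective (a₂ := ⊥) ·)
        (Subrepresentation.toSubmodule_injective (a₂ := ⊤) ·) }

variable [ρ.IsIrreducible]

theorem apply_eq_smul_of_commute {f : Module.End k V} (hf : ∀ g, Commute f (ρ g)) {c : k} {v : V}
    (hv : v ≠ 0) (hfv : f v = c • v) (w : V) : f w = c • w := by
  have htop : Module.End.eigenspace f c = ⊤ := by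
    refine ((isIrreducible_iff.1 ‹ρ.IsIrreducible›).2 _ fun g u hu ↦ ?_).resolve_left fun h ↦
      hv ((Submodule.mem_bot k).1 (h ▸ Module.End.mem_eigenspace_iff.2 hfv))
    rw [Module.End.mem_eigenspace_iff] at hu ⊢
    rw [← Module.End.mul_apply, (hf g).eq, Module.End.mul_apply, hu, map_smul]
  exact Module.End.mem_eigenspace_iff.1 (htop ▸ Submodule.mem_top)

end Irreducible

section Twist

variable {k G V W : Type*} [Monoid G] [AddCommGroup V] [AddCommGroup W]

/-- The twist `ρ ⊗ α` of a representation by a one-dimensional character, realised on the space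
of `ρ`. -/
def twist [CommRing k] [Module k V] (α : G →* kˣ) (ρ : Representation k G V) :
    Representation k G V where
  toFun g := (α g : k) • ρ g
  map_one' := by simp
  map_mul' g h := by rw [map_mul, map_mul, Units.val_mul, smul_mul_smul_comm]

variable [Field k] [Module k V] [Module k W]

@[simp]
theorem twist_apply (α : G →* kˣ) (ρ : Representation k G V) (g : G) (v : V) :
    twist α ρ g v = (α g : k) • ρ g v :=
  rfl

/-- Twist-equivalence of representations: `ρ` is equivalent to `σ ⊗ α` for some one-dimensional
character `α`. -/
def TwistEquiv (ρ : Representation k G V) (σ : Representation k G W) : Prop :=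
  ∃ (α : G →* kˣ) (e : V ≃ₗ[k] W), ∀ g v, e (ρ g v) = (α g : k) • σ g (e v)

variable {ρ : Representation k G V} {σ : Representation k G W}

namespace TwistEquiv

theorem symm (h : TwistEquiv ρ σ) : TwistEquiv σ ρ := by
  obtain ⟨α, e, he⟩ := h
  refine ⟨α⁻¹, e.symm, fun g w ↦ e.injective ?_⟩
  rw [map_smul, he, e.apply_symm_apply, e.apply_symm_apply, smul_smul, MonoidHom.inv_apply,
    Units.inv_mul, one_smul]

theorem trans {X : Type*} [AddCommGroup X] [Module k X] {τ : Representation k G X}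
    (h : TwistEquiv ρ σ) (h' : TwistEquiv σ τ) : TwistEquiv ρ τ := by
  obtain ⟨α, e, he⟩ := h
  obtain ⟨β, f, hf⟩ := h'
  exact ⟨α * β, e.trans f, fun g v ↦ by simp [he, hf, smul_smul]⟩

theorem of_equiv (e : ρ.Equiv σ) : TwistEquiv ρ σ :=
  ⟨1, e.toLinearEquiv, fun g v ↦ by
    simpa using LinearMap.congr_fun (e.isIntertwining' g) v⟩

theorem isIrreducible [ρ.IsIrreducible] (h : TwistEquiv ρ σ) : σ.IsIrreducible := by
  obtain ⟨α, e, he⟩ := h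
  obtain ⟨_, hρ⟩ := isIrreducible_iff.1 ‹ρ.IsIrreducible›
  refine isIrreducible_iff.2 ⟨e.symm.toEquiv.nontrivial, fun U hU ↦ ?_⟩
  have hinv : ∀ g, ∀ v ∈ U.comap e.toLinearMap, ρ g v ∈ U.comap e.toLinearMap := by
    intro g v hv
    rw [Submodule.mem_comap, LinearEquiv.coe_coe] at hv ⊢
    rw [he]
    exact U.smul_mem _ (hU g _ hv)
  refine (hρ _ hinv).imp (fun h ↦ ?_) fun h ↦ ?_
  · rwa [Submodule.comap_equiv_eq_map_symm, Submodule.map_eq_bot_iff] at h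
  · rwa [Submodule.comap_equiv_eq_map_symm, Submodule.map_eq_top_iff] at h

end TwistEquiv

theorem twistEquiv_twist (α : G →* kˣ) (ρ : Representation k G V) : TwistEquiv (twist α ρ) ρ :=
  ⟨α, .refl k V, fun _ _ ↦ rfl⟩

end Twist

section ContinuousCoeffs

variable {k G V W : Type*} [Field k] [TopologicalSpace k] [Group G] [TopologicalSpace G]
  [AddCommGroup V] [Module k V] [AddCommGroup W] [Module k W]

/-- Continuity of all matrix coefficients of `ρ`, a form of continuity that needs neither a basis
nor a topology on the space of `ρ`. -/
def HasContinuousCoeffs (ρ : Representation k G V) : Prop :=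
  ∀ (f : Module.Dual k V) (v : V), Continuous fun g ↦ f (ρ g v)

variable {ρ : Representation k G V} {σ : Representation k G W}

theorem HasContinuousCoeffs.of_equiv (hρ : HasContinuousCoeffs ρ) (e : ρ.Equiv σ) :
    HasContinuousCoeffs σ := by
  intro f w
  obtain ⟨v, rfl⟩ := e.toLinearEquiv.surjective w
  exact (hρ (f ∘ₗ e.toLinearEquiv.toLinearMap) v).congr fun g ↦
    congrArg f (LinearMap.congr_fun (e.isIntertwining' g) v)

theorem HasContinuousCoeffs.continuous_of_equiv_twist [IsTopologicalDivisionRing k] [T1Space k]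
    [Nontrivial V] (hρ : HasContinuousCoeffs ρ) (hσ : HasContinuousCoeffs σ) {α : G →* kˣ}
    {e : V ≃ₗ[k] W} (he : ∀ g v, e (ρ g v) = (α g : k) • σ g (e v)) :
    Continuous fun g ↦ (α g : k) := by
  refine continuous_iff_continuousAt.2 fun g₀ ↦ ?_
  obtain ⟨v, hv⟩ := exists_ne (0 : V)
  have hne : σ g₀ (e v) ≠ 0 := fun h ↦ hv (by simpa using congrArg (σ g₀⁻¹) h)
  obtain ⟨f, hf⟩ := Module.Projective.exists_dual_ne_zero k hne
  have hdiv : ContinuousAt (fun g ↦ f (e (ρ g v)) / f (σ g (e v))) g₀ :=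
    (hρ (f ∘ₗ e.toLinearMap) v).continuousAt.div₀ (hσ f (e v)).continuousAt hf
  refine hdiv.congr ?_
  filter_upwards [(hσ f (e v)).continuousAt.eventually_ne hf] with g hg
  rw [he, map_smul, smul_eq_mul, mul_div_cancel_right₀ _ hg]

end ContinuousCoeffs

section MatrixRep

variable {k G ι : Type*} [Field k] [Group G] [Fintype ι] [DecidableEq ι]

/-- The representation on column vectors given by a homomorphism into `GL ι k`. -/
def matrixRep (ρ : G →* GL ι k) : Representation k G (ι → k) :=
  (Matrix.toLinAlgEquiv' : Matrix ι ι k ≃ₐ[k] _).toMonoidHom.comp ((Units.coeHom _).comp ρ)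

@[simp]
theorem matrixRep_apply (ρ : G →* GL ι k) (g : G) (v : ι → k) :
    matrixRep ρ g v = (ρ g : Matrix ι ι k).mulVec v :=
  rfl

theorem isIrreducibleRep_iff {G : Type} [Group G] {n : ℕ} [NeZero n] {ρ : G →* GL (Fin n) ℂ} :
    IsIrreducibleRep ρ ↔ (matrixRep ρ).IsIrreducible := by
  rw [isIrreducible_iff, and_iff_right (inferInstance : Nontrivial (Fin n → ℂ))]
  rfl

theorem exists_matrixRep_equiv {V : Type*} [AddCommGroup V] [Module k V] [FiniteDimensional k V]
    (ρ : Representation k G V) :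
    ∃ σ : G →* GL (Fin (Module.finrank k V)) k, Nonempty (ρ.Equiv (matrixRep σ)) := by
  let b := Module.finBasis k V
  let σ := ((LinearMap.toMatrixAlgEquiv b).toMonoidHom.comp ρ).toHomUnits
  exact ⟨σ, ⟨.mk b.equivFun fun g ↦ LinearMap.ext fun v ↦
    (LinearMap.toMatrix_mulVec_repr b b (ρ g) v).symm⟩⟩

theorem exists_intertwining_twist_iff_exists_conj {ρ σ : G →* GL ι k} {α : G →* kˣ} :
    (∃ e : (ι → k) ≃ₗ[k] (ι → k), ∀ g v, e (matrixRep ρ g v) = (α g : k) • matrixRep σ g (e v)) ↔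
      ∃ T : GL ι k, ∀ g, (ρ g : Matrix ι ι k) =
        (α g : k) • ((T * σ g * T⁻¹ : GL ι k) : Matrix ι ι k) := by
  let toEquiv : GL ι k ≃* ((ι → k) ≃ₗ[k] (ι → k)) :=
    Matrix.GeneralLinearGroup.toLin.trans (LinearMap.GeneralLinearGroup.generalLinearEquiv _ _)
  have htoEquiv (T : GL ι k) (v : ι → k) : toEquiv T v = (T : Matrix ι ι k).mulVec v := rfl
  rw [toEquiv.surjective.exists, (Equiv.inv (GL ι k)).surjective.exists]
  refine exists_congr fun T ↦ forall_congr' fun g ↦ ?_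
  calc (∀ v, toEquiv T⁻¹ (matrixRep ρ g v) = (α g : k) • matrixRep σ g (toEquiv T⁻¹ v))
    _ ↔ (↑T⁻¹ * ρ g : Matrix ι ι k) = (α g : k) • (σ g * ↑T⁻¹ : Matrix ι ι k) := by
      simp only [htoEquiv, matrixRep_apply, Matrix.mulVec_mulVec, ← Matrix.smul_mulVec]
      exact Matrix.ext_iff_mulVec.symm
    _ ↔ _ := by
      rw [Units.inv_mul_eq_iff_eq_mul, Matrix.mul_smul, Units.val_mul, Units.val_mul, mul_assoc]

theorem continuous_iff_hasContinuousCoeffs_matrixRep [TopologicalSpace k] [IsTopologicalRing k]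
    [TopologicalSpace G] {ρ : G →* GL ι k} :
    Continuous (fun g ↦ (ρ g : Matrix ι ι k)) ↔ HasContinuousCoeffs (matrixRep ρ) := by
  refine ⟨fun h f v ↦ (LinearMap.continuous_on_pi f).comp (h.matrix_mulVec continuous_const),
    fun h ↦ continuous_matrix fun i j ↦ ?_⟩
  simpa using h (LinearMap.proj i) (Pi.single j 1)

theorem contTwistRel_iff {G : Type} [Group G] [TopologicalSpace G] {n : ℕ} [NeZero n]
    {ρ σ : ContIrrRep G n} :
    contTwistRel G n ρ σ ↔ TwistEquiv (matrixRep ρ.1) (matrixRep σ.1) := by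
  refine exists_congr fun α ↦ ?_
  rw [← exists_intertwining_twist_iff_exists_conj, and_iff_right_iff_imp]
  rintro ⟨e, he⟩
  exact (continuous_iff_hasContinuousCoeffs_matrixRep.1 ρ.2.1).continuous_of_equiv_twist
    (continuous_iff_hasContinuousCoeffs_matrixRep.1 σ.2.1) he

end MatrixRep

theorem natCard_quot_eq {α β : Type*} {r : α → α → Prop} {F : α → β}
    (hF : Function.Surjective F) (hr : ∀ x y, r x y ↔ F x = F y) :
    Nat.card (Quot r) = Nat.card β := by
  refine Nat.card_congr (Equiv.ofBijective (Quot.lift F fun x y ↦ (hr x y).1)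
    ⟨?_, (Quot.surjective_lift _).2 hF⟩)
  rintro ⟨x⟩ ⟨y⟩ h
  exact Quot.sound ((hr x y).2 h)

namespace Heisenberg

variable {R : Type} [CommRing R]

@[simp] theorem one_a : (1 : Heisenberg R).a = 0 := rfl
@[simp] theorem one_b : (1 : Heisenberg R).b = 0 := rfl
@[simp] theorem one_c : (1 : Heisenberg R).c = 0 := rfl
@[simp] theorem mul_a (g h : Heisenberg R) : (g * h).a = g.a + h.a := rfl
@[simp] theorem mul_b (g h : Heisenberg R) : (g * h).b = g.b + h.b := rfl
@[simp] theorem mul_c (g h : Heisenberg R) : (g * h).c = g.c + h.c + g.a * h.b := rfl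

/-- The one-parameter subgroup of matrices whose only off-diagonal entry is `a`. -/
@[simps]
def xHom : AddChar R (Heisenberg R) where
  toFun a := ⟨a, 0, 0⟩
  map_zero_eq_one' := rfl
  map_add_eq_mul' a a' := by ext <;> simp

/-- The one-parameter subgroup of matrices whose only off-diagonal entry is `b`. -/
@[simps]
def yHom : AddChar R (Heisenberg R) where
  toFun b := ⟨0, b, 0⟩
  map_zero_eq_one' := rfl
  map_add_eq_mul' b b' := by ext <;> simp

/-- The central one-parameter subgroup of matrices whose only off-diagonal entry is `c`. -/
@[simps]
def zHom : AddChar R (Heisenberg R) where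
  toFun c := ⟨0, 0, c⟩
  map_zero_eq_one' := rfl
  map_add_eq_mul' c c' := by ext <;> simp

theorem commute_zHom (c : R) (g : Heisenberg R) : Commute (zHom c) g := by
  ext <;> simp [add_comm]

theorem mul_yHom (g : Heisenberg R) (s : R) :
    g * yHom s = yHom (s + g.b) * xHom g.a * zHom (g.c + g.a * s) := by
  ext <;> simp [add_comm]

theorem mul_yHom_eq_yHom_mul (g : Heisenberg R) (s : R) :
    g * yHom s = yHom s * g * zHom (s * g.a) := by
  ext <;> simp [add_comm, mul_comm]

/-- The one-dimensional character of the Heisenberg group, trivial on the centre, given by a pair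
of additive characters. -/
def abelianChar {k : Type*} [Field k] (χ χ' : AddChar R k) : Heisenberg R →* kˣ :=
  MonoidHom.toHomUnits
    { toFun g := χ g.a * χ' g.b
      map_one' := by simp
      map_mul' g h := by simp [AddChar.map_add_eq_mul, mul_mul_mul_comm] }

@[simp]
theorem abelianChar_apply {k : Type*} [Field k] (χ χ' : AddChar R k) (g : Heisenberg R) :
    (abelianChar χ χ' g : k) = χ g.a * χ' g.b :=
  rfl

theorem map_zHom_eq_one {A : Type*} [CommGroup A] (α : Heisenberg R →* A) (c : R) :
    α (zHom c) = 1 := by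
  have h : xHom c * yHom 1 = yHom 1 * xHom c * zHom (1 * c) := mul_yHom_eq_yHom_mul _ _
  simpa [mul_comm] using congrArg α h

section CentralCharacter

variable {k V W : Type*} [Field k] [AddCommGroup V] [Module k V] [AddCommGroup W] [Module k W]
  {ρ : Representation k (Heisenberg R) V} {σ : Representation k (Heisenberg R) W}

/-- The centre `zHom` of the Heisenberg group acts through the additive character `ψ`. -/
def HasCentralCharacter (ρ : Representation k (Heisenberg R) V) (ψ : AddChar R k) : Prop :=
  ∀ c v, ρ (zHom c) v = ψ c • v

theorem exists_hasCentralCharacter [IsAlgClosed k] [FiniteDimensional k V]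
    (ρ : Representation k (Heisenberg R) V) [ρ.IsIrreducible] :
    ∃ ψ, HasCentralCharacter ρ ψ := by
  have := (isIrreducible_iff.1 ‹ρ.IsIrreducible›).1
  obtain ⟨ψ, v, hv, hψ⟩ := exists_addChar_eigenvector (ρ.compAddChar zHom)
  exact ⟨ψ, fun c ↦ apply_eq_smul_of_commute (fun g ↦ (commute_zHom c g).map ρ) hv (hψ c)⟩

theorem HasCentralCharacter.unique [Nontrivial V] {ψ ψ' : AddChar R k}
    (h : HasCentralCharacter ρ ψ) (h' : HasCentralCharacter ρ ψ') : ψ = ψ' := by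
  obtain ⟨v, hv⟩ := exists_ne (0 : V)
  exact AddChar.ext _ _ fun c ↦ smul_left_injective k hv ((h c v).symm.trans (h' c v))

theorem HasCentralCharacter.of_twistEquiv {ψ : AddChar R k} (h : HasCentralCharacter ρ ψ)
    (hρσ : TwistEquiv ρ σ) : HasCentralCharacter σ ψ := by
  obtain ⟨α, e, he⟩ := hρσ
  intro c w
  obtain ⟨v, rfl⟩ := e.surjective w
  simpa [map_zHom_eq_one, h c v] using (he (zHom c) v).symm

end CentralCharacter

section SchrodingerRep

variable {k : Type*} [Field k]

/-- The Schrödinger representation with central character `ψ`: `R` acts on functions on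
`R ⧸ addCharConductor ψ` by translations (through `yHom`) and by modulations (through `xHom`). -/
def schrodingerRep (ψ : AddChar R k) :
    Representation k (Heisenberg R) (R ⧸ addCharConductor ψ →₀ k) where
  toFun g := Finsupp.linearCombination k fun x ↦
    Finsupp.single (x + Ideal.Quotient.mk _ g.b) (ψ g.c * conductorPairing ψ x g.a)
  map_one' := by ext; simp
  map_mul' g h := by
    refine Finsupp.lhom_ext' fun x ↦ LinearMap.ext_ring ?_
    obtain ⟨s, rfl⟩ := Ideal.Quotient.mk_surjective x
    simp only [LinearMap.comp_apply, Module.End.mul_apply, Finsupp.lsingle_apply,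
      Finsupp.linearCombination_single, Finsupp.smul_single, smul_eq_mul, one_mul, mul_a, mul_b,
      mul_c, ← map_add, conductorPairing_mk, add_mul, AddChar.map_add_eq_mul]
    congr 1
    · simp [add_assoc, add_comm g.b]
    · rw [mul_comm g.a]
      ring

@[simp]
theorem schrodingerRep_single (ψ : AddChar R k) (g : Heisenberg R)
    (x : R ⧸ addCharConductor ψ) (r : k) :
    schrodingerRep ψ g (Finsupp.single x r) = Finsupp.single (x + Ideal.Quotient.mk _ g.b)
      (r * (ψ g.c * conductorPairing ψ x g.a)) := by
  simp [schrodingerRep, -Finsupp.single_mul]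

theorem hasCentralCharacter_schrodingerRep (ψ : AddChar R k) :
    HasCentralCharacter (schrodingerRep ψ) ψ := by
  intro c u
  induction u using Finsupp.induction_linear with
  | zero => simp
  | add u v hu hv => rw [map_add, smul_add, hu, hv]
  | single x r => simp [mul_comm]

instance isIrreducible_schrodingerRep (ψ : AddChar R k) : (schrodingerRep ψ).IsIrreducible := by
  refine isIrreducible_iff.2 ⟨inferInstance, fun U hU ↦ or_iff_not_imp_left.2 fun hbot ↦ ?_⟩
  obtain ⟨u, huU, hu⟩ := U.exists_mem_ne_zero_of_ne_bot hbot
  obtain ⟨i, hi⟩ := Finsupp.support_nonempty_iff.2 hu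
  have hsingle : Finsupp.single i (u i) ∈ U :=
    mem_of_sum_mem_of_addChar (T := (schrodingerRep ψ).compAddChar xHom)
      (conductorPairing_injective ψ) (w := fun j ↦ Finsupp.single j (u j))
      (fun j a ↦ by simp [mul_comm]) (fun a ↦ hU (xHom a)) (s := u.support)
      (by convert huU; exact u.sum_single) hi
  have hmem (j : R ⧸ addCharConductor ψ) (r : k) : Finsupp.single j r ∈ U := by
    obtain ⟨b, hb⟩ := Ideal.Quotient.mk_surjective (j - i)
    have := U.smul_mem (r * (u i)⁻¹) (hU (yHom b) _ hsingle)
    simpa [hb, mul_assoc, inv_mul_cancel₀ (Finsupp.mem_support_iff.1 hi)] using this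
  exact eq_top_iff.2 fun v _ ↦ v.sum_single ▸ sum_mem fun j _ ↦ hmem j (v j)

end SchrodingerRep

section StoneVonNeumann

variable {R : Type} [CommRing R] {k V W : Type*} [Field k] [AddCommGroup V] [Module k V]
  [AddCommGroup W] [Module k W] {ρ : Representation k (Heisenberg R) V} {ψ : AddChar R k}

theorem exists_twist_fixed_vectors [IsAlgClosed k] [FiniteDimensional k V] [Nontrivial V]
    (ρ : Representation k (Heisenberg R) V) :
    ∃ α : Heisenberg R →* kˣ, (∃ v ≠ 0, ∀ a, twist α ρ (xHom a) v = v) ∧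
      ∃ w ≠ 0, ∀ b, twist α ρ (yHom b) w = w := by
  obtain ⟨χ, v, hv, hχ⟩ := exists_addChar_eigenvector (ρ.compAddChar xHom)
  obtain ⟨χ', w, hw, hχ'⟩ := exists_addChar_eigenvector (ρ.compAddChar yHom)
  have cancel (φ : AddChar R k) (a : R) : φ (-a) * φ a = 1 := by
    rw [← AddChar.map_add_eq_mul, neg_add_cancel, AddChar.map_zero_eq_one]
  have hx (a : R) : ρ (xHom a) v = χ a • v := hχ a
  have hy (b : R) : ρ (yHom b) w = χ' b • w := hχ' b
  refine ⟨abelianChar χ⁻¹ χ'⁻¹, ⟨v, hv, fun a ↦ ?_⟩, w, hw, fun b ↦ ?_⟩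
  · rw [twist_apply, hx, smul_smul]
    simp [cancel]
  · rw [twist_apply, hy, smul_smul]
    simp [cancel]

theorem HasCentralCharacter.apply_yHom_eq_one [ρ.IsIrreducible] (hψ : HasCentralCharacter ρ ψ)
    {w : V} (hw : w ≠ 0) (hfix : ∀ b, ρ (yHom b) w = w) {t : R} (ht : t ∈ addCharConductor ψ) :
    ρ (yHom t) = 1 := by
  have hcomm (g : Heisenberg R) : Commute (ρ (yHom t)) (ρ g) := by
    ext v
    rw [← map_mul, ← map_mul, mul_yHom_eq_yHom_mul, map_mul _ (_ * _), Module.End.mul_apply,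
      hψ, mem_addCharConductor_iff.1 ht, one_smul]
  ext v
  simpa using apply_eq_smul_of_commute hcomm (c := 1) hw (by rw [hfix, one_smul]) v

/-- The intertwining map from the Schrödinger representation that sends the delta function at `0`
to a vector `v` fixed by all `xHom a`. -/
def schrodingerHom (hψ : HasCentralCharacter ρ ψ)
    (hy : ∀ t ∈ addCharConductor ψ, ρ (yHom t) = 1) {v : V} (hv : ∀ a, ρ (xHom a) v = v) :
    (schrodingerRep ψ).IntertwiningMap ρ where
  toLinearMap := Finsupp.linearCombination k fun s ↦
    quotientAddChar (addCharConductor ψ) (ρ.compAddChar yHom) hy s v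
  isIntertwining' g := by
    refine Finsupp.lhom_ext' fun s ↦ LinearMap.ext_ring ?_
    obtain ⟨s, rfl⟩ := Ideal.Quotient.mk_surjective s
    have hmk (r : R) : quotientAddChar _ (ρ.compAddChar yHom) hy (Ideal.Quotient.mk _ r) =
        ρ (yHom r) := quotientAddChar_mk hy r
    have hg : ρ g (ρ (yHom s) v) = ψ (g.c + g.a * s) • ρ (yHom (s + g.b)) v := by
      rw [← Module.End.mul_apply, ← map_mul, mul_yHom, map_mul, Module.End.mul_apply, hψ,
        map_smul, map_mul, Module.End.mul_apply, hv]
    simp [← map_add, -Finsupp.single_mul, hmk, hg, AddChar.map_add_eq_mul ψ, mul_comm s]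

theorem schrodingerHom_single_zero (hψ : HasCentralCharacter ρ ψ)
    (hy : ∀ t ∈ addCharConductor ψ, ρ (yHom t) = 1) {v : V} (hv : ∀ a, ρ (xHom a) v = v) :
    schrodingerHom hψ hy hv (Finsupp.single 0 1) = v := by
  change Finsupp.linearCombination k _ _ = v
  simp

/-- The Stone–von Neumann theorem up to twist. -/
theorem HasCentralCharacter.twistEquiv_schrodingerRep [IsAlgClosed k] [FiniteDimensional k V]
    [ρ.IsIrreducible] (hψ : HasCentralCharacter ρ ψ) : TwistEquiv ρ (schrodingerRep ψ) := by
  have := (isIrreducible_iff.1 ‹ρ.IsIrreducible›).1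
  obtain ⟨α, ⟨v, hv, hx⟩, w, hw, hy⟩ := exists_twist_fixed_vectors ρ
  have htwist : TwistEquiv ρ (twist α ρ) := (twistEquiv_twist α ρ).symm
  have := htwist.isIrreducible
  have hψ' : HasCentralCharacter (twist α ρ) ψ := hψ.of_twistEquiv htwist
  let f := schrodingerHom hψ' (fun _ ht ↦ hψ'.apply_yHom_eq_one hw hy ht) hx
  have hf : Function.Bijective f :=
    (Representation.IsIrreducible.bijective_or_eq_zero f).resolve_right fun h ↦ hv <| by
      rw [← schrodingerHom_single_zero hψ' (fun _ ht ↦ hψ'.apply_yHom_eq_one hw hy ht) hx]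
      exact DFunLike.congr_fun h _
  exact htwist.trans (TwistEquiv.of_equiv (f.ofBijective hf)).symm

theorem HasCentralCharacter.twistEquiv [IsAlgClosed k] [FiniteDimensional k V]
    [FiniteDimensional k W] {σ : Representation k (Heisenberg R) W} [ρ.IsIrreducible]
    [σ.IsIrreducible] (hρ : HasCentralCharacter ρ ψ) (hσ : HasCentralCharacter σ ψ) :
    TwistEquiv ρ σ :=
  hρ.twistEquiv_schrodingerRep.trans hσ.twistEquiv_schrodingerRep.symm

theorem HasCentralCharacter.finrank_eq [IsAlgClosed k] [FiniteDimensional k V] [ρ.IsIrreducible]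
    (hψ : HasCentralCharacter ρ ψ) :
    Module.finrank k V = Nat.card (R ⧸ addCharConductor ψ) := by
  obtain ⟨-, e, -⟩ := hψ.twistEquiv_schrodingerRep
  rw [e.finrank_eq, Module.finrank_eq_nat_card_basis Finsupp.basisSingleOne]

end StoneVonNeumann

section ContinuousCharacters

variable {R : Type} [TopologicalSpace R]

theorem continuous_coords : Continuous fun g : Heisenberg R ↦ (g.a, g.b, g.c) :=
  continuous_induced_dom

@[fun_prop]
theorem continuous_a : Continuous fun g : Heisenberg R ↦ g.a :=
  continuous_coords.fst

@[fun_prop]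
theorem continuous_b : Continuous fun g : Heisenberg R ↦ g.b :=
  continuous_coords.snd.fst

@[fun_prop]
theorem continuous_c : Continuous fun g : Heisenberg R ↦ g.c :=
  continuous_coords.snd.snd

variable [CommRing R]

theorem continuous_zHom : Continuous (zHom : R → Heisenberg R) := by
  refine continuous_induced_rng.2 ?_
  change Continuous fun c : R ↦ ((0 : R), (0 : R), c)
  fun_prop

variable {k V : Type*} [Field k] [TopologicalSpace k] [IsTopologicalRing k] [AddCommGroup V]
  [Module k V]

theorem HasCentralCharacter.continuous [Nontrivial V] {ρ : Representation k (Heisenberg R) V}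
    {ψ : AddChar R k} (hψ : HasCentralCharacter ρ ψ) (hρ : HasContinuousCoeffs ρ) :
    Continuous ψ := by
  obtain ⟨v, hv⟩ := exists_ne (0 : V)
  obtain ⟨f, hf⟩ := Module.Projective.exists_dual_ne_zero k hv
  refine (((hρ f v).comp continuous_zHom).mul_const (f v)⁻¹).congr fun c ↦ ?_
  rw [Function.comp_apply, hψ, map_smul, smul_eq_mul, mul_inv_cancel_right₀ hf]

theorem hasContinuousCoeffs_schrodingerRep [IsTopologicalRing R] [T1Space k] {ψ : AddChar R k}
    (hψ : Continuous ψ) [Finite (R ⧸ addCharConductor ψ)] :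
    HasContinuousCoeffs (schrodingerRep ψ) := by
  intro f v
  have := discreteTopology_quotient_of_isOpen (isOpen_conductor_of_continuous hψ)
  have hmk : Continuous (Ideal.Quotient.mk (addCharConductor ψ)) := continuous_quot_mk
  induction v using Finsupp.induction_linear with
  | zero => simpa using continuous_const
  | add v w hv hw => simpa using Continuous.fun_add hv hw
  | single x r =>
    obtain ⟨x, rfl⟩ := Ideal.Quotient.mk_surjective x
    have htrans : Continuous fun g : Heisenberg R ↦
        f (Finsupp.single (Ideal.Quotient.mk _ x + Ideal.Quotient.mk _ g.b) 1) :=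
      (continuous_of_discreteTopology (f := fun y : R ⧸ addCharConductor ψ ↦
        f (Finsupp.single (Ideal.Quotient.mk _ x + y) 1))).comp (hmk.comp continuous_b)
    have hscalar : Continuous fun g : Heisenberg R ↦ r * (ψ g.c * ψ (x * g.a)) := by fun_prop
    refine (hscalar.mul htrans).congr fun g ↦ ?_
    rw [schrodingerRep_single, conductorPairing_mk, Pi.mul_apply, ← smul_eq_mul, ← map_smul,
      Finsupp.smul_single_one]

end ContinuousCharacters

section Counting

variable {R : Type} [CommRing R] [TopologicalSpace R]

theorem exists_contIrrRep_hasCentralCharacter [IsTopologicalRing R] {n : ℕ} [NeZero n]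
    {ψ : AddChar R ℂ} (hψ : Continuous ψ) (hn : Nat.card (R ⧸ addCharConductor ψ) = n) :
    ∃ ρ : ContIrrRep (Heisenberg R) n, HasCentralCharacter (matrixRep ρ.1) ψ := by
  have : Finite (R ⧸ addCharConductor ψ) := Nat.finite_of_card_ne_zero (hn ▸ NeZero.ne n)
  obtain ⟨σ, ⟨e⟩⟩ := exists_matrixRep_equiv (schrodingerRep ψ)
  obtain rfl : Module.finrank ℂ (R ⧸ addCharConductor ψ →₀ ℂ) = n :=
    (hasCentralCharacter_schrodingerRep ψ).finrank_eq.trans hn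
  have hequiv := TwistEquiv.of_equiv e
  exact ⟨⟨σ, continuous_iff_hasContinuousCoeffs_matrixRep.2
    ((hasContinuousCoeffs_schrodingerRep hψ).of_equiv e), isIrreducibleRep_iff.2
      hequiv.isIrreducible⟩, (hasCentralCharacter_schrodingerRep ψ).of_twistEquiv hequiv⟩

theorem rTildeCont_eq_card_addChar [IsTopologicalRing R] (n : ℕ) [NeZero n] :
    rTildeCont (Heisenberg R) n =
      Nat.card {ψ : AddChar R ℂ // Continuous ψ ∧ Nat.card (R ⧸ addCharConductor ψ) = n} := by
  have hirr (ρ : ContIrrRep (Heisenberg R) n) : (matrixRep ρ.1).IsIrreducible :=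
    isIrreducibleRep_iff.1 ρ.2.2
  choose Ψ hΨ using fun ρ : ContIrrRep (Heisenberg R) n ↦
    exists_hasCentralCharacter (matrixRep ρ.1)
  have hcont (ρ) : Continuous (Ψ ρ) :=
    (hΨ ρ).continuous (continuous_iff_hasContinuousCoeffs_matrixRep.1 ρ.2.1)
  have hcard (ρ) : Nat.card (R ⧸ addCharConductor (Ψ ρ)) = n := by
    rw [← (hΨ ρ).finrank_eq, Module.finrank_fin_fun]
  refine natCard_quot_eq (F := fun ρ ↦ ⟨Ψ ρ, hcont ρ, hcard ρ⟩) ?_ fun ρ σ ↦ ?_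
  · rintro ⟨ψ, hψ, hn⟩
    obtain ⟨ρ, hρ⟩ := exists_contIrrRep_hasCentralCharacter hψ hn
    exact ⟨ρ, Subtype.ext ((hΨ ρ).unique hρ)⟩
  · rw [contTwistRel_iff, Subtype.mk.injEq]
    exact ⟨fun h ↦ ((hΨ ρ).of_twistEquiv h).unique (hΨ σ),
      fun h ↦ (hΨ ρ).twistEquiv (h ▸ hΨ σ)⟩

end Counting

end Heisenberg

section ConductorIndexOne

theorem natCard_quotient_conductor_eq_one_iff {R M : Type*} [CommRing R] [CommMonoid M]
    {ψ : AddChar R M} : Nat.card (R ⧸ addCharConductor ψ) = 1 ↔ ψ = 1 := by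
  rw [← Submodule.cardQuot_apply, Submodule.cardQuot_eq_one_iff, eq_top_iff,
    le_addCharConductor_iff, AddChar.eq_one_iff]
  exact forall_congr' fun r ↦ forall_prop_of_true Submodule.mem_top

theorem card_addChar_of_conductor_index_one (R : Type*) [CommRing R] [TopologicalSpace R] :
    Nat.card {ψ : AddChar R ℂ // Continuous ψ ∧ Nat.card (R ⧸ addCharConductor ψ) = 1} = 1 := by
  simp only [natCard_quotient_conductor_eq_one_iff]
  have : Unique {ψ : AddChar R ℂ // Continuous ψ ∧ ψ = 1} :=
    { default := ⟨1, continuous_const (y := (1 : ℂ)), rfl⟩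
      uniq := fun ψ ↦ Subtype.ext ψ.2.2 }
  exact Nat.card_unique

end ConductorIndexOne

section DiscreteValuationRing

variable {R : Type*} [CommRing R] [IsDomain R] [IsDiscreteValuationRing R] (P : Ideal R)
  [P.IsMaximal]

theorem exists_eq_pow_of_ne_bot {I : Ideal R} (hI : I ≠ ⊥) : ∃ i, I = P ^ i := by
  rw [IsLocalRing.eq_maximalIdeal ‹P.IsMaximal›]
  exact exists_maximalIdeal_pow_eq_of_principal R inferInstance I hI

theorem pow_strictAnti : StrictAnti fun i : ℕ ↦ P ^ i :=
  Ideal.pow_right_strictAnti P (Ring.ne_bot_of_isMaximal_of_not_isField ‹_›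
    (IsDiscreteValuationRing.not_isField R)) (Ideal.IsMaximal.ne_top ‹_›)

theorem pow_ne_bot (i : ℕ) : P ^ i ≠ ⊥ :=
  (bot_le.trans_lt (pow_strictAnti P i.lt_succ_self)).ne'

theorem eq_pow_succ_iff {I : Ideal R} {i : ℕ} :
    I = P ^ (i + 1) ↔ P ^ (i + 1) ≤ I ∧ ¬ P ^ i ≤ I := by
  have hanti := pow_strictAnti P
  constructor
  · rintro rfl
    exact ⟨le_rfl, (hanti i.lt_succ_self).not_ge⟩
  · rintro ⟨h, h'⟩
    obtain ⟨j, rfl⟩ := exists_eq_pow_of_ne_bot P (ne_bot_of_le_ne_bot (pow_ne_bot P _) h)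
    rw [hanti.le_iff_ge] at h h'
    rw [show j = i + 1 by omega]

theorem natCard_quotient_pow (i : ℕ) : Nat.card (R ⧸ P ^ i) = Nat.card (R ⧸ P) ^ i :=
  cardQuot_pow_of_prime (Ring.ne_bot_of_isMaximal_of_not_isField ‹_›
    (IsDiscreteValuationRing.not_isField R))

variable [TopologicalSpace R] [IsTopologicalRing R] [CompactSpace R] [T2Space R]

theorem finite_quotient_iff_ne_bot {I : Ideal R} : Finite (R ⧸ I) ↔ I ≠ ⊥ :=
  IsLocalRing.isOpen_iff_finite_quotient.symm.trans IsDiscreteValuationRing.isOpen_iff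

theorem one_lt_natCard_quotient : 1 < Nat.card (R ⧸ P) :=
  Finite.one_lt_card

theorem exists_eq_pow_of_natCard_quotient_ne_zero {I : Ideal R} (h : Nat.card (R ⧸ I) ≠ 0) :
    ∃ i, I = P ^ i :=
  exists_eq_pow_of_ne_bot P (finite_quotient_iff_ne_bot.1 (Nat.finite_of_card_ne_zero h))

theorem natCard_quotient_eq_pow_iff {I : Ideal R} {i : ℕ} :
    Nat.card (R ⧸ I) = Nat.card (R ⧸ P) ^ i ↔ I = P ^ i := by
  refine ⟨fun h ↦ ?_, fun h ↦ by rw [h, natCard_quotient_pow]⟩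
  have hq := one_lt_natCard_quotient P
  obtain ⟨j, rfl⟩ := exists_eq_pow_of_natCard_quotient_ne_zero P (I := I)
    (h ▸ pow_ne_zero i (by omega))
  rw [natCard_quotient_pow] at h
  rw [Nat.pow_right_injective hq h]

theorem card_addChar_of_conductor_index_pow {i : ℕ} (hi : 1 ≤ i) :
    Nat.card {ψ : AddChar R ℂ //
        Continuous ψ ∧ Nat.card (R ⧸ addCharConductor ψ) = Nat.card (R ⧸ P) ^ i} =
      Nat.card (R ⧸ P) ^ i - Nat.card (R ⧸ P) ^ (i - 1) := by
  obtain ⟨i, rfl⟩ := Nat.exists_eq_add_of_le' hi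
  let trivialOn (j : ℕ) : Set (AddChar R ℂ) := {ψ | P ^ j ≤ addCharConductor ψ}
  have hcard (j : ℕ) : (trivialOn j).ncard = Nat.card (R ⧸ P) ^ j :=
    have : Finite (R ⧸ P ^ j) := finite_quotient_iff_ne_bot.2 (pow_ne_bot P j)
    (card_addChar_le_conductor (P ^ j)).trans (natCard_quotient_pow P j)
  have hset : {ψ : AddChar R ℂ |
      Continuous ψ ∧ Nat.card (R ⧸ addCharConductor ψ) = Nat.card (R ⧸ P) ^ (i + 1)} =
      trivialOn (i + 1) \ trivialOn i := by
    ext ψ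
    rw [Set.mem_ofPred_eq, natCard_quotient_eq_pow_iff, and_iff_right_of_imp, eq_pow_succ_iff]
    · rfl
    · exact fun h ↦ continuous_of_isOpen_of_le_conductor (Ideal.isOpen_pow_of_isMaximal P _) h.ge
  have hsub : trivialOn i ⊆ trivialOn (i + 1) := fun ψ h ↦
    (Ideal.pow_le_pow_right i.le_succ).trans h
  have hfin : (trivialOn i).Finite := Set.finite_of_ncard_ne_zero <| by
    rw [hcard]
    exact pow_ne_zero i (zero_lt_one.trans (one_lt_natCard_quotient P)).ne'
  calc Nat.card _ = (trivialOn (i + 1) \ trivialOn i).ncard := congrArg Set.ncard hset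
    _ = Nat.card (R ⧸ P) ^ (i + 1) - Nat.card (R ⧸ P) ^ i := by
      rw [Set.ncard_sdiff hsub hfin, hcard, hcard]

theorem card_addChar_of_conductor_index_ne_pow {n : ℕ} (hn : 2 ≤ n)
    (h : ∀ i : ℕ, 1 ≤ i → n ≠ Nat.card (R ⧸ P) ^ i) :
    Nat.card {ψ : AddChar R ℂ // Continuous ψ ∧ Nat.card (R ⧸ addCharConductor ψ) = n} = 0 := by
  refine Nat.card_eq_zero.2 (.inl ⟨fun ⟨ψ, _, hψ⟩ ↦ ?_⟩)
  obtain ⟨i, hi⟩ := exists_eq_pow_of_natCard_quotient_ne_zero P (I := addCharConductor ψ) (by omega)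
  rw [hi, natCard_quotient_pow] at hψ
  cases i with
  | zero => exact absurd (hψ.symm.trans (pow_zero _)) (by omega)
  | succ i => exact h _ i.succ_pos hψ.symm

end DiscreteValuationRing

theorem stmt1_general {R : Type} [CommRing R] [IsDomain R] [IsDiscreteValuationRing R]
    [TopologicalSpace R] [IsTopologicalRing R] [CompactSpace R] [T2Space R] (P : Ideal R)
    [P.IsMaximal] :
    rTildeCont (Heisenberg R) 1 = 1 ∧
      (∀ i : ℕ, 1 ≤ i → rTildeCont (Heisenberg R) (Nat.card (R ⧸ P) ^ i) =
        Nat.card (R ⧸ P) ^ i - Nat.card (R ⧸ P) ^ (i - 1)) ∧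
      ∀ n : ℕ, 2 ≤ n → (∀ i : ℕ, 1 ≤ i → n ≠ Nat.card (R ⧸ P) ^ i) →
        rTildeCont (Heisenberg R) n = 0 := by
  refine ⟨?_, fun i hi ↦ ?_, fun n hn h ↦ ?_⟩
  · rw [Heisenberg.rTildeCont_eq_card_addChar, card_addChar_of_conductor_index_one]
  · have : NeZero (Nat.card (R ⧸ P) ^ i) :=
      ⟨pow_ne_zero i (zero_lt_one.trans (one_lt_natCard_quotient P)).ne'⟩
    rw [Heisenberg.rTildeCont_eq_card_addChar, card_addChar_of_conductor_index_pow P hi]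
  · have : NeZero n := ⟨by omega⟩
    rw [Heisenberg.rTildeCont_eq_card_addChar, card_addChar_of_conductor_index_ne_pow P hn h]

theorem not_isField_integralClosure {A : Type*} (L : Type*) [CommRing A] [CommRing L] [Algebra A L]
    [FaithfulSMul A L] (hA : ¬ IsField A) : ¬ IsField (integralClosure A L) :=
  have hinj : Function.Injective (algebraMap A (integralClosure A L)) :=
    .of_comp (f := Subtype.val) (FaithfulSMul.algebraMap_injective A L)
  fun h ↦ hA (isField_of_isIntegral_of_isField hinj h)

section PadicValuationRing

variable (p : ℕ) [Fact p.Prime] {K : Type*} [NormedField K] [NormedAlgebra ℚ_[p] K]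
  [FiniteDimensional ℚ_[p] K] [Algebra ℤ_[p] K] [IsScalarTower ℤ_[p] ℚ_[p] K]

theorem mem_integralClosure_iff_norm_le_one {x : K} :
    x ∈ integralClosure ℤ_[p] K ↔ ‖x‖ ≤ 1 := by
  have hx : IsIntegral ℚ_[p] x := Algebra.IsIntegral.isIntegral x
  rw [NormedAlgebra.norm_eq_spectralNorm ℚ_[p] x, spectralNorm,
    spectralValue_le_one_iff (minpoly.monic hx), mem_integralClosure_iff]
  refine ⟨fun hint i ↦ ?_, fun h ↦ ?_⟩
  · rw [minpoly.isIntegrallyClosed_eq_field_fractions' ℚ_[p] hint, Polynomial.coeff_map]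
    exact PadicInt.norm_le_one _
  · have hlifts : minpoly ℚ_[p] x ∈ Polynomial.lifts (algebraMap ℤ_[p] ℚ_[p]) :=
      (Polynomial.lifts_iff_coeff_lifts _).2 fun i ↦ ⟨⟨_, h i⟩, rfl⟩
    obtain ⟨f, hf, -, hmonic⟩ :=
      Polynomial.lifts_and_natDegree_eq_and_monic hlifts (minpoly.monic hx)
    refine ⟨f, hmonic, ?_⟩
    rw [IsScalarTower.algebraMap_eq ℤ_[p] ℚ_[p] K, ← Polynomial.eval₂_map, hf]
    exact minpoly.aeval _ _

variable (K)

instance compactSpace_integralClosure : CompactSpace (integralClosure ℤ_[p] K) := by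
  have : ProperSpace K := FiniteDimensional.proper ℚ_[p] K
  have hball : (integralClosure ℤ_[p] K : Set K) = Metric.closedBall 0 1 := by
    ext x
    rw [mem_closedBall_zero_iff, SetLike.mem_coe, mem_integralClosure_iff_norm_le_one]
  exact isCompact_iff_compactSpace.1 (hball ▸ isCompact_closedBall _ _)

instance isFractionRing_integralClosure : IsFractionRing (integralClosure ℤ_[p] K) K :=
  integralClosure.isFractionRing_of_finite_extension ℚ_[p] K

instance valuationRing_integralClosure : ValuationRing (integralClosure ℤ_[p] K) := by
  refine (ValuationRing.iff_isInteger_or_isInteger _ K).2 fun x ↦ ?_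
  have hint {y : K} (hy : ‖y‖ ≤ 1) : IsLocalization.IsInteger (integralClosure ℤ_[p] K) y :=
    ⟨⟨y, (mem_integralClosure_iff_norm_le_one p).2 hy⟩, rfl⟩
  refine (le_total ‖x‖ 1).imp hint fun hx ↦ hint ?_
  rw [norm_inv]
  exact inv_le_one_of_one_le₀ hx

instance isDiscreteValuationRing_integralClosure :
    IsDiscreteValuationRing (integralClosure ℤ_[p] K) := by
  have : FaithfulSMul ℤ_[p] K := .trans ℤ_[p] ℚ_[p] K
  have : IsDedekindDomain (integralClosure ℤ_[p] K) :=
    integralClosure.isDedekindDomain ℤ_[p] ℚ_[p] K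
  have hfield : ¬ IsField (integralClosure ℤ_[p] K) :=
    not_isField_integralClosure K (IsDiscreteValuationRing.not_isField ℤ_[p])
  exact ((IsDiscreteValuationRing.TFAE _ hfield).out 0 1 rfl rfl).2 inferInstance

end PadicValuationRing

theorem stmt1 :
    ∃ S : Finset ℕ, ∀ (p : ℕ) [Fact p.Prime], p ∉ S →
      ∀ (K : Type) [NormedField K] [NormedAlgebra ℚ_[p] K] [FiniteDimensional ℚ_[p] K]
        [Algebra ℤ_[p] K] [IsScalarTower ℤ_[p] ℚ_[p] K],
      ∀ 𝔓 : Ideal (integralClosure ℤ_[p] K), 𝔓.IsMaximal →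
        rTildeCont (Heisenberg (integralClosure ℤ_[p] K)) 1 = 1 ∧
        (∀ i : ℕ, 1 ≤ i →
          rTildeCont (Heisenberg (integralClosure ℤ_[p] K))
              (Nat.card ((integralClosure ℤ_[p] K) ⧸ 𝔓) ^ i)
            = Nat.card ((integralClosure ℤ_[p] K) ⧸ 𝔓) ^ i
              - Nat.card ((integralClosure ℤ_[p] K) ⧸ 𝔓) ^ (i - 1)) ∧
        (∀ n : ℕ, 2 ≤ n →
          (∀ i : ℕ, 1 ≤ i → n ≠ Nat.card ((integralClosure ℤ_[p] K) ⧸ 𝔓) ^ i) →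
          rTildeCont (Heisenberg (integralClosure ℤ_[p] K)) n = 0) :=
  ⟨∅, fun _ _ _ _ _ _ _ _ _ 𝔓 _ ↦ stmt1_general 𝔓⟩
end
end

section
/- Let q > 1 be an integer. For each i = 1, …, r, let N_i: ℤ → ℂ be a function of the form N_i(f) = Σ_{j=1}^{u_i} m_{ij} α_{ij}^f, where the m_{ij} are nonzero integers and α_{i1}, …, α_{iu_i} are distinct nonzero complex numbers. Let W_1, …, W_r ∈ ℚ(X, Y_1, …, Y_m) each be regular at (q^f, Y_1, …, Y_m) for all f ∈ ℤ∖{0}. If Σ_{i=1}^r N_i(f) · W_i(q^f, Y_1, …, Y_m) = 0 in ℂ(Y_1, …, Y_m) for all f ∈ ℕ, then the same identity holds for all f ∈ ℤ∖{0}. -/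
noncomputable section

abbrev PolyXY (m : ℕ) := MvPolynomial (Fin (m + 1)) ℚ
abbrev RatXY (m : ℕ) := FractionRing (PolyXY m)
/-- the field ℂ(Y₁,…,Y_m) -/
abbrev CRatY (m : ℕ) := FractionRing (MvPolynomial (Fin m) ℂ)

/-- substitution X ↦ q, Yⱼ ↦ Yⱼ, landing in ℂ(Y₁,…,Y_m) -/
def specXC (m : ℕ) (q : ℚ) : PolyXY m →+* CRatY m :=
  (algebraMap (MvPolynomial (Fin m) ℂ) (CRatY m)).comp
    ((MvPolynomial.map (Rat.castHom ℂ)).comp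
      (MvPolynomial.eval₂Hom MvPolynomial.C
        (Fin.cases (MvPolynomial.C q) fun j => MvPolynomial.X j)))

def castC (m : ℕ) (z : ℂ) : CRatY m :=
  algebraMap (MvPolynomial (Fin m) ℂ) (CRatY m) (MvPolynomial.C z)

def RegularAtXC {m : ℕ} (W : RatXY m) (q : ℚ) : Prop :=
  ∃ gh : PolyXY m × PolyXY m, specXC m q gh.2 ≠ 0 ∧
    W * algebraMap (PolyXY m) (RatXY m) gh.2 = algebraMap (PolyXY m) (RatXY m) gh.1

open scoped Classical in
def evalAtXC {m : ℕ} (W : RatXY m) (q : ℚ) : CRatY m :=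
  if h : RegularAtXC W q then specXC m q h.choose.1 / specXC m q h.choose.2 else 0

/-!
Exponential sums `f ↦ ∑ cⱼ βⱼ ^ f` on `ℤ` form an algebra, and by Dedekind's independence of the
characters `n ↦ βⁿ` of `ℕ` an exponential sum that vanishes for all large `f` is zero. Clearing a
denominator `H` of the `Wᵢ` that is nonzero at `X = q ^ f₀` turns `∑ Nᵢ Wᵢ` into such a sum, and
multiplying it once more by `H(q ^ f)` makes it vanish at every large `f`, including those with
`H(q ^ f) = 0`. The product is thus zero at `f₀`, where its factor `H(q ^ f₀)` is not.
-/

open Filter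

section ExponentialSums

variable (R : Type*) [CommRing R]

/-- The two-sided geometric sequences `f ↦ β ^ f`, as a homomorphism in the ratio `β`; ratios are
units so that negative exponents make sense. -/
def zpowSeq : Rˣ →* (ℤ → R) where
  toFun β f := ↑(β ^ f)
  map_one' := by ext f; simp
  map_mul' β γ := by ext f; simp [mul_zpow]

/-- The algebra of exponential sums `f ↦ ∑ cⱼ βⱼ ^ f` on `ℤ`, with coefficients `cⱼ` in `R` and
ratios `βⱼ` units of `R`. -/
def exponentialSums : Subalgebra R (ℤ → R) :=
  Algebra.adjoin R (MonoidHom.mrange (zpowSeq R))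

variable {R}

theorem zpowSeq_mem_exponentialSums (β : Rˣ) : zpowSeq R β ∈ exponentialSums R :=
  Algebra.subset_adjoin ⟨β, rfl⟩

theorem const_mem_exponentialSums (c : R) : (fun _ : ℤ => c) ∈ exponentialSums R :=
  (exponentialSums R).algebraMap_mem c

theorem mem_span_range_zpowSeq {s : ℤ → R} (hs : s ∈ exponentialSums R) :
    s ∈ Submodule.span R (Set.range (zpowSeq R)) := by
  rwa [exponentialSums, ← Subalgebra.mem_toSubmodule, Algebra.adjoin_eq_span,
    Submonoid.closure_eq, MonoidHom.coe_mrange] at hs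

theorem linearIndependent_units_pow [IsDomain R] :
    LinearIndependent R fun (β : Rˣ) (n : ℕ) => (β : R) ^ n :=
  (linearIndependent_monoidHom (Multiplicative ℕ) R).comp (fun β : Rˣ => powersHom R β)
    ((powersHom R).injective.comp Units.val_injective)

theorem linearIndependent_zpowSeq_add [IsDomain R] (F : ℕ) :
    LinearIndependent R fun (β : Rˣ) (n : ℕ) => zpowSeq R β ↑(F + n) := by
  convert linearIndependent_units_pow.units_smul fun β : Rˣ => β ^ F using 1
  ext β n
  simp [zpowSeq, zpow_add, Units.smul_def]

theorem eq_zero_of_mem_exponentialSums [IsDomain R] {s : ℤ → R}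
    (hs : s ∈ exponentialSums R) (hzero : ∀ᶠ n : ℕ in atTop, s n = 0) : s = 0 := by
  obtain ⟨F, hF⟩ := eventually_atTop.1 hzero
  let restrict : (ℤ → R) →ₗ[R] (ℕ → R) := LinearMap.funLeft R R fun n : ℕ => ↑(F + n)
  have hindep : LinearIndependent R (restrict ∘ zpowSeq R) := linearIndependent_zpowSeq_add F
  have hker : restrict s = 0 := funext fun n => hF _ (F.le_add_right n)
  exact Submodule.disjoint_def.1 (Submodule.range_ker_disjoint hindep) s
    (mem_span_range_zpowSeq hs) hker

end ExponentialSums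

section Specialization

variable {m : ℕ}

theorem castC_eq_algebraMap (z : ℂ) : castC m z = algebraMap ℂ (CRatY m) z := rfl

theorem specXC_C (x a : ℚ) : specXC m x (MvPolynomial.C a) = castC m a := by
  simp [specXC, castC]

theorem specXC_X_zero (x : ℚ) : specXC m x (MvPolynomial.X 0) = castC m x := by
  simp [specXC, castC]

theorem specXC_X_succ (x : ℚ) (j : Fin m) :
    specXC m x (MvPolynomial.X j.succ) =
      algebraMap (MvPolynomial (Fin m) ℂ) (CRatY m) (MvPolynomial.X j) := by
  simp [specXC]

theorem castC_zpow_mem_exponentialSums {a : ℂ} (ha : a ≠ 0) :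
    (fun f : ℤ => castC m (a ^ f)) ∈ exponentialSums (CRatY m) := by
  convert zpowSeq_mem_exponentialSums
    (Units.mk0 (algebraMap ℂ (CRatY m) a) ((map_ne_zero _).2 ha)) using 1
  ext f
  simp [zpowSeq, castC_eq_algebraMap, map_zpow₀]

theorem castC_sum_mem_exponentialSums {κ : Type*} [Fintype κ] (c : κ → ℂ) {a : κ → ℂ}
    (ha : ∀ j, a j ≠ 0) :
    (fun f : ℤ => castC m (∑ j, c j * a j ^ f)) ∈ exponentialSums (CRatY m) := by
  convert sum_mem fun j (_ : j ∈ Finset.univ) => mul_mem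
    (const_mem_exponentialSums (castC m (c j))) (castC_zpow_mem_exponentialSums (m := m) (ha j))
    using 1
  ext f
  simp only [castC_eq_algebraMap, map_sum, map_mul, Finset.sum_apply, Pi.mul_apply]

theorem specXC_zpow_mem_exponentialSums {q : ℚ} (hq : q ≠ 0) (p : PolyXY m) :
    (fun f : ℤ => specXC m (q ^ f) p) ∈ exponentialSums (CRatY m) := by
  induction p using MvPolynomial.induction_on with
  | C a => simpa only [specXC_C] using const_mem_exponentialSums _
  | add p p' hp hp' =>
    simp only [map_add]
    exact add_mem hp hp'
  | mul_X p i hp =>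
    have hX : (fun f : ℤ => specXC m (q ^ f) (MvPolynomial.X i)) ∈
        exponentialSums (CRatY m) := by
      cases i using Fin.cases with
      | zero =>
        simpa only [specXC_X_zero, Rat.cast_zpow] using
          castC_zpow_mem_exponentialSums (Rat.cast_ne_zero.2 hq)
      | succ j => simpa only [specXC_X_succ] using const_mem_exponentialSums _
    simp only [map_mul]
    exact mul_mem hp hX

end Specialization

section RegularValues

variable {m : ℕ}

theorem evalAtXC_eq_div {W : RatXY m} {x : ℚ} {g h : PolyXY m} (hh : specXC m x h ≠ 0)
    (hW : W * algebraMap (PolyXY m) (RatXY m) h = algebraMap (PolyXY m) (RatXY m) g) :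
    evalAtXC W x = specXC m x g / specXC m x h := by
  have hreg : RegularAtXC W x := ⟨(g, h), hh, hW⟩
  obtain ⟨hh', hW'⟩ := hreg.choose_spec
  have hcross : hreg.choose.1 * h = g * hreg.choose.2 := by
    apply IsFractionRing.injective (PolyXY m) (RatXY m)
    rw [map_mul, map_mul, ← hW', ← hW, mul_right_comm]
  rw [evalAtXC, dif_pos hreg, div_eq_div_iff hh' hh, ← map_mul, ← map_mul, hcross]

theorem exists_common_denominator {ι : Type*} [Finite ι] {W : ι → RatXY m} {x : ℚ}
    (hreg : ∀ i, RegularAtXC (W i) x) :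
    ∃ (h : PolyXY m) (g : ι → PolyXY m), specXC m x h ≠ 0 ∧ ∀ i,
      W i * algebraMap (PolyXY m) (RatXY m) h = algebraMap (PolyXY m) (RatXY m) (g i) := by
  classical
  cases nonempty_fintype ι
  choose gh hne hW using hreg
  refine ⟨∏ i, (gh i).2, fun i => (gh i).1 * ∏ j ∈ Finset.univ.erase i, (gh j).2, ?_, fun i => ?_⟩
  · rw [map_prod]
    exact Finset.prod_ne_zero_iff.2 fun i _ => hne i
  · rw [← Finset.mul_prod_erase _ _ (Finset.mem_univ i), map_mul, map_mul, ← mul_assoc, hW]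

end RegularValues

theorem stmt8_general {m : ℕ} {q : ℚ} (hq : q ≠ 0) {ι : Type*} [Fintype ι]
    {N : ι → ℤ → CRatY m} (hN : ∀ i, N i ∈ exponentialSums (CRatY m)) (W : ι → RatXY m)
    (hvan : ∀ᶠ n : ℕ in atTop, (∀ i, RegularAtXC (W i) (q ^ (n : ℤ))) →
      ∑ i, N i n * evalAtXC (W i) (q ^ (n : ℤ)) = 0)
    (f : ℤ) (hreg : ∀ i, RegularAtXC (W i) (q ^ f)) :
    ∑ i, N i f * evalAtXC (W i) (q ^ f) = 0 := by
  obtain ⟨h, g, hh, hW⟩ := exists_common_denominator hreg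
  let num : ℤ → CRatY m := ∑ i, N i * fun k : ℤ => specXC m (q ^ k) (g i)
  let den : ℤ → CRatY m := fun k => specXC m (q ^ k) h
  have hquot (k : ℤ) (hk : den k ≠ 0) :
      ∑ i, N i k * evalAtXC (W i) (q ^ k) = num k / den k := by
    simp only [num, Finset.sum_apply, Finset.sum_div]
    exact Finset.sum_congr rfl fun i _ => by
      rw [evalAtXC_eq_div hk (hW i), Pi.mul_apply, mul_div_assoc]
  have hmem : num * den ∈ exponentialSums (CRatY m) :=
    mul_mem (sum_mem fun i _ => mul_mem (hN i) (specXC_zpow_mem_exponentialSums hq (g i)))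
      (specXC_zpow_mem_exponentialSums hq h)
  have hlarge : ∀ᶠ n : ℕ in atTop, (num * den) n = 0 := by
    filter_upwards [hvan] with n hn
    rcases eq_or_ne (den n) 0 with hden | hden
    · rw [Pi.mul_apply, hden, mul_zero]
    · have hsum := hn fun i => ⟨(g i, h), hden, hW i⟩
      rw [hquot n hden, div_eq_zero_iff, or_iff_left hden] at hsum
      rw [Pi.mul_apply, hsum, zero_mul]
  have hprod : num f * den f = 0 := congrFun (eq_zero_of_mem_exponentialSums hmem hlarge) f
  rw [hquot f hh, (mul_eq_zero_iff_right hh).1 hprod, zero_div]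

theorem stmt8 (m : ℕ) (q : ℤ) (hq : 1 < q) (r : ℕ)
    (u : Fin r → ℕ)
    (mm : (i : Fin r) → Fin (u i) → ℤ) (α : (i : Fin r) → Fin (u i) → ℂ)
    (hm : ∀ i j, mm i j ≠ 0) (hα0 : ∀ i j, α i j ≠ 0)
    (hdist : ∀ i, Function.Injective (α i))
    (W : Fin r → RatXY m)
    (hreg : ∀ i, ∀ f : ℤ, f ≠ 0 → RegularAtXC (W i) ((q : ℚ) ^ f))
    (hvan : ∀ f : ℕ, 1 ≤ f →
      ∑ i, castC m (∑ j, (mm i j : ℂ) * α i j ^ (f : ℤ))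
          * evalAtXC (W i) ((q : ℚ) ^ (f : ℤ)) = 0) :
    ∀ f : ℤ, f ≠ 0 →
      ∑ i, castC m (∑ j, (mm i j : ℂ) * α i j ^ f)
          * evalAtXC (W i) ((q : ℚ) ^ f) = 0 := by
  intro f hf
  exact stmt8_general (by positivity)
    (fun i => castC_sum_mem_exponentialSums _ (hα0 i)) W
    ((eventually_ge_atTop 1).mono fun n hn _ => hvan n hn) f fun i => hreg i f hf
end
end

section
/- Let m_1, …, m_u be nonzero integers and let α_1, …, α_u be distinct nonzero algebraic numbers (elements of the algebraic closure of ℚ inside ℂ). If Σ_{i=1}^u m_i α_i^f is a rational number for every f ∈ ℕ, then Σ_{i=1}^u m_i α_i^f is a rational number for every f ∈ ℤ. -/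
/-!
The tuple `a = (α₁, …, α_u)` is an integral unit of the `ℚ`-algebra `ℂ ^ u`, so `a⁻¹` is a
polynomial in `a` with rational coefficients. Hence every power `a ^ f` with `f ∈ ℤ` is a rational
linear combination of the powers of `a` whose exponent is at least any given bound. Applying the
linear form `x ↦ ∑ mᵢ xᵢ` transfers rationality from large exponents to all exponents.
-/

open Polynomial

section Units

variable {R A : Type*} [CommRing R] [Ring A] [Algebra R A]

theorem units_inv_mem_adjoin_of_isIntegral [IsArtinianRing R] {a : Aˣ}
    (ha : IsIntegral R (a : A)) : (↑a⁻¹ : A) ∈ Algebra.adjoin R {(a : A)} := by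
  let b : Algebra.adjoin R {(a : A)} := ⟨a, Algebra.self_mem_adjoin_singleton R _⟩
  have hb_int : IsIntegral R b :=
    (isIntegral_algHom_iff (Algebra.adjoin R {(a : A)}).val Subtype.val_injective).mp ha
  have hb_reg : b ∈ nonZeroDivisors (Algebra.adjoin R {(a : A)}) :=
    comap_nonZeroDivisors_le_of_injective (f := (Algebra.adjoin R {(a : A)}).subtype)
      Subtype.val_injective a.isUnit.mem_nonZeroDivisors
  obtain ⟨c, hbc⟩ :=
    (IsArtinianRing.isUnit_of_isIntegral_of_nonZeroDivisor hb_int hb_reg).exists_right_inv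
  rw [a.inv_eq_of_mul_eq_one_right (congrArg Subtype.val hbc)]
  exact c.2

theorem units_zpow_mem_adjoin_of_isIntegral [IsArtinianRing R] {a : Aˣ}
    (ha : IsIntegral R (a : A)) (f : ℤ) : (↑(a ^ f) : A) ∈ Algebra.adjoin R {(a : A)} := by
  obtain ⟨n, rfl | rfl⟩ := f.eq_nat_or_neg
  · simpa using pow_mem (Algebra.self_mem_adjoin_singleton R (a : A)) n
  · simpa using pow_mem (units_inv_mem_adjoin_of_isIntegral ha) n

theorem units_zpow_mul_mem_of_forall_ge (W : Submodule R A) {a : Aˣ} {N : ℤ}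
    (hW : ∀ f ≥ N, (↑(a ^ f) : A) ∈ W) {x : A} (hx : x ∈ Algebra.adjoin R {(a : A)}) :
    ↑(a ^ N) * x ∈ W := by
  obtain ⟨p, rfl⟩ := Algebra.adjoin_singleton_eq_range_aeval R (a : A) ▸ hx
  change ↑(a ^ N) * aeval (a : A) p ∈ W
  rw [aeval_eq_sum_range, Finset.mul_sum]
  refine W.sum_mem fun k _ => ?_
  have hpow : (↑(a ^ N) : A) * (a : A) ^ k = ↑(a ^ (N + k)) := by simp [zpow_add]
  rw [mul_smul_comm, hpow]
  exact W.smul_mem _ (hW _ (by lia))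

theorem units_zpow_mem_of_forall_ge [IsArtinianRing R] (W : Submodule R A) {a : Aˣ}
    (ha : IsIntegral R (a : A)) {N : ℤ} (hW : ∀ f ≥ N, (↑(a ^ f) : A) ∈ W) (f : ℤ) :
    (↑(a ^ f) : A) ∈ W := by
  rw [← add_sub_cancel N f, zpow_add, Units.val_mul]
  exact units_zpow_mul_mem_of_forall_ge W hW (units_zpow_mem_adjoin_of_isIntegral ha (f - N))

end Units

theorem isIntegral_pi {R ι : Type*} {A : ι → Type*} [Finite ι] [CommRing R] [∀ i, Ring (A i)]
    [∀ i, Algebra R (A i)] {x : ∀ i, A i} (hx : ∀ i, IsIntegral R (x i)) : IsIntegral R x := by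
  have := Fintype.ofFinite ι
  choose p hp_monic hp_root using hx
  refine ⟨∏ i, p i, monic_prod_of_monic _ _ fun i _ => hp_monic i, ?_⟩
  rw [← aeval_def]
  ext i
  obtain ⟨q, hq⟩ : p i ∣ ∏ j, p j := Finset.dvd_prod_of_mem p (Finset.mem_univ i)
  rw [aeval_pi_apply₂, hq, map_mul, aeval_def, hp_root i, zero_mul, Pi.zero_apply]

theorem stmt9_general {K L M ι : Type*} [Field K] [DivisionRing L] [Algebra K L] [AddCommGroup M]
    [Module K M] [Module L M] [IsScalarTower K L M] [Fintype ι] (W : Submodule K M) (v : ι → M)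
    {α : ι → L} (halg : ∀ i, IsAlgebraic K (α i)) (hα : ∀ i, α i ≠ 0) {N : ℤ}
    (hW : ∀ f ≥ N, ∑ i, α i ^ f • v i ∈ W) (f : ℤ) : ∑ i, α i ^ f • v i ∈ W := by
  obtain ⟨a, rfl⟩ : IsUnit α := Pi.isUnit_iff.mpr fun i => (hα i).isUnit
  let φ : (ι → L) →ₗ[K] M := (Fintype.linearCombination L v).restrictScalars K
  have hφ (g : ℤ) : φ ↑(a ^ g) = ∑ i, (a : ι → L) i ^ g • v i := by
    simp [φ, Fintype.linearCombination_apply, Units.val_zpow_eq_zpow_val]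
  have ha : IsIntegral K (a : ι → L) := isIntegral_pi fun i => (halg i).isIntegral
  simp only [← hφ] at hW ⊢
  exact units_zpow_mem_of_forall_ge (W.comap φ) ha hW f

theorem stmt9 (u : ℕ) (m : Fin u → ℤ) (α : Fin u → ℂ)
    (hm : ∀ i, m i ≠ 0)
    (halg : ∀ i, IsAlgebraic ℚ (α i))
    (hα : ∀ i, α i ≠ 0)
    (hdist : Function.Injective α)
    (hrat : ∀ f : ℕ, 1 ≤ f → ∃ x : ℚ, (x : ℂ) = ∑ i, (m i : ℂ) * α i ^ (f : ℤ)) :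
    ∀ f : ℤ, ∃ x : ℚ, (x : ℂ) = ∑ i, (m i : ℂ) * α i ^ f := by
  have h := stmt9_general (1 : Submodule ℚ ℂ) (fun i => (m i : ℂ)) halg hα (N := 1)
  simp only [Submodule.mem_one, eq_ratCast, smul_eq_mul, mul_comm (α _ ^ (_ : ℤ))] at h
  exact h fun f hf => by
    lift f to ℕ using by lia
    exact hrat f (by lia)
end
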